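/- arXiv:0912.1518 — 2 statements merged into one kernel-verified Lean document; each statement's English description precedes it below -/
import Mathlib

section
/- Let l_1, m_1, k be positive integers with l_1 ≤ m_1. Then the number of subsets X of [l_1,m_1] such that l_1 ∈ X, |X| = k, and gcd(X) = 1 equals Σ_{d | l_1} μ(d) · C(⌊m_1/d⌋ − l_1/d, k−1), where C(·,·) denotes the binomial coefficient. -/
/-!
Since `∑_{d ∣ n} μ(d)` is the indicator of `n = 1`, the sets with gcd `1` are counted by
`∑_d μ(d) N(d)`, where `N(d)` is the number of sets all of whose elements are multiples of `d`.
Such a set containing `l₁` exists only if `d ∣ l₁`, and it is then determined by its other `k - 1`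
elements, which are chosen among the `⌊m₁/d⌋ - l₁/d` multiples of `d` in `(l₁, m₁]`.
-/

section MoebiusCounting

open Finset
open scoped ArithmeticFunction.Moebius

theorem sum_divisors_moebius (n : ℕ) : ∑ d ∈ n.divisors, μ d = if n = 1 then 1 else 0 := by
  rw [← ArithmeticFunction.coe_mul_zeta_apply, ArithmeticFunction.moebius_mul_coe_zeta,
    ArithmeticFunction.one_apply]

theorem card_filter_eq_one_eq_sum_moebius {ι : Type*} {S : Finset ι} {f : ι → ℕ} {n : ℕ}
    (hn : n ≠ 0) (hf : ∀ i ∈ S, f i ∣ n) :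
    (#{i ∈ S | f i = 1} : ℤ) = ∑ d ∈ n.divisors, μ d * #{i ∈ S | d ∣ f i} := by
  calc (#{i ∈ S | f i = 1} : ℤ)
      = ∑ i ∈ S, ∑ d ∈ (f i).divisors, μ d := by
        simp only [sum_divisors_moebius, sum_boole]
    _ = ∑ i ∈ S, ∑ d ∈ n.divisors, if d ∣ f i then μ d else 0 :=
        sum_congr rfl fun i hi => by
          rw [← Nat.divisors_filter_dvd_of_dvd hn (hf i hi), sum_filter]
    _ = ∑ d ∈ n.divisors, μ d * #{i ∈ S | d ∣ f i} := by
        rw [sum_comm]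
        simp only [← sum_filter, sum_const, nsmul_eq_mul, mul_comm]

theorem filter_powersetCard_forall {α : Type*} (p : α → Prop) [DecidablePred p]
    (t : Finset α) (k : ℕ) :
    {X ∈ t.powersetCard k | ∀ x ∈ X, p x} = {x ∈ t | p x}.powersetCard k := by
  ext X
  simp only [mem_filter, mem_powersetCard, subset_iff, imp_and, forall_and, and_right_comm]

theorem card_filter_powersetCard_subset_dvd_gcd {s t : Finset ℕ} {k d : ℕ} (hst : s ⊆ t)
    (hk : #s ≤ k) (hd : d ∣ s.gcd id) :
    #{X ∈ {X ∈ t.powersetCard k | s ⊆ X} | d ∣ X.gcd id}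
      = (#{x ∈ t | d ∣ x} - #s).choose (k - #s) := by
  have hs : s ⊆ {x ∈ t | d ∣ x} := fun x hx =>
    mem_filter.2 ⟨hst hx, Finset.dvd_gcd_iff.1 hd x hx⟩
  rw [← card_filter_powersetCard_subset s _ k hs hk, ← filter_powersetCard_forall, filter_comm]
  simp only [Finset.dvd_gcd_iff, id]

theorem card_filter_powersetCard_subset_gcd_eq_one {s t : Finset ℕ} {k : ℕ} (hst : s ⊆ t)
    (hk : #s ≤ k) (hs : s.gcd id ≠ 0) :
    (#{X ∈ {X ∈ t.powersetCard k | s ⊆ X} | X.gcd id = 1} : ℤ)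
      = ∑ d ∈ (s.gcd id).divisors, μ d * (#{x ∈ t | d ∣ x} - #s).choose (k - #s) := by
  rw [card_filter_eq_one_eq_sum_moebius hs fun X hX => gcd_mono (mem_filter.1 hX).2]
  refine sum_congr rfl fun d hd => ?_
  rw [card_filter_powersetCard_subset_dvd_gcd hst hk (Nat.dvd_of_mem_divisors hd)]

theorem card_filter_dvd_Ioc (l m d : ℕ) : #{x ∈ Ioc l m | d ∣ x} = m / d - l / d := by
  rcases le_total l m with hlm | hml
  · have hunion : #{x ∈ Ioc 0 l | d ∣ x} + #{x ∈ Ioc l m | d ∣ x} = #{x ∈ Ioc 0 m | d ∣ x} := by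
      rw [← Ioc_union_Ioc_eq_Ioc l.zero_le hlm, filter_union, card_union_of_disjoint]
      exact disjoint_filter_filter (Ioc_disjoint_Ioc_of_le le_rfl)
    rw [Nat.Ioc_filter_dvd_card_eq_div, Nat.Ioc_filter_dvd_card_eq_div] at hunion
    omega
  · rw [Ioc_eq_empty_of_le hml, filter_empty, card_empty,
      Nat.sub_eq_zero_of_le (Nat.div_le_div_right hml)]

theorem card_filter_dvd_Icc_of_dvd {l m d : ℕ} (hlm : l ≤ m) (hd : d ∣ l) :
    #{x ∈ Icc l m | d ∣ x} = m / d - l / d + 1 := by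
  rw [← Ioc_insert_left hlm, filter_insert, if_pos hd, card_insert_of_notMem (by simp),
    card_filter_dvd_Ioc]

end MoebiusCounting

/-- Lemma 2(b): the number of `k`-element relatively prime subsets of `[l₁,m₁]`
containing `l₁` equals `∑_{d ∣ l₁} μ(d) C(⌊m₁/d⌋ - l₁/d, k-1)`. -/
theorem stmt_4 (l₁ m₁ k : ℕ) (hl₁ : 0 < l₁) (hk : 0 < k) (h : l₁ ≤ m₁) :
    ((((Finset.Icc l₁ m₁).powerset).filter
        (fun X : Finset ℕ => l₁ ∈ X ∧ X.card = k ∧ X.gcd id = 1)).card : ℤ)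
      = ∑ d ∈ l₁.divisors,
          (ArithmeticFunction.moebius d) *
            (Nat.choose (m₁ / d - l₁ / d) (k - 1)) := by
  have hgcd : ({l₁} : Finset ℕ).gcd id = l₁ := by simp
  have hsubset : {l₁} ⊆ Finset.Icc l₁ m₁ := by simpa using h
  have hfilter : ((Finset.Icc l₁ m₁).powerset).filter
        (fun X : Finset ℕ => l₁ ∈ X ∧ X.card = k ∧ X.gcd id = 1)
      = (((Finset.Icc l₁ m₁).powersetCard k).filter ({l₁} ⊆ ·)).filter (·.gcd id = 1) := by
    ext X
    simp only [Finset.mem_filter, Finset.mem_powerset, Finset.mem_powersetCard,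
      Finset.singleton_subset_iff]
    tauto
  rw [hfilter, card_filter_powersetCard_subset_gcd_eq_one hsubset hk (by rw [hgcd]; exact hl₁.ne'),
    hgcd]
  refine Finset.sum_congr rfl fun d hd => ?_
  rw [card_filter_dvd_Icc_of_dvd h (Nat.dvd_of_mem_divisors hd), Finset.card_singleton,
    Nat.add_sub_cancel]
end

section
/- Let m, n be integers with 1 < n < m − 1. Then Σ_{d=1}^{m} μ(d) · 2^{⌊(n+1)/d⌋ − ⌊(n−1)/d⌋ + ⌊m/d⌋ − ⌊(m−1)/d⌋} equals: 2 + M(m) if gcd(m,n) > 1 and gcd(m,n+1) > 1; 3 + M(m) if exactly one of gcd(m,n) = 1 and gcd(m,n+1) = 1 holds; and 4 + M(m) if gcd(m,n) = gcd(m,n+1) = 1. -/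
/-!
If `S` is a set of positive integers at most `N`, then `2 ^ #{a ∈ S | d ∣ a}` counts the subsets
`T ⊆ S` all of whose elements are divisible by `d`, that is, with `d ∣ gcd T`. After exchanging the
sums, a nonempty `T` contributes `∑ μ(d)` over the divisors of `gcd T`, which is `1` if
`gcd T = 1` and `0` otherwise, while `T = ∅` contributes the Mertens function `M(N)`.

The exponent in the theorem is the number of multiples of `d` in `S = {n, n + 1, m}`. The relatively
prime subsets of this `S` are `{n, n + 1}` and `S` itself, together with `{n, m}` and `{n + 1, m}`
when these are relatively prime.
-/

open ArithmeticFunction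

/-- The relatively prime subsets of `S`, those whose greatest common divisor is `1`. The empty set
is not one of them, since its `Finset.gcd` is `0`. -/
def coprimeSubsets (S : Finset ℕ) : Finset (Finset ℕ) :=
  {T ∈ S.powerset | T.gcd id = 1}

theorem filter_dvd_Icc_eq_divisors {g N : ℕ} (hg : g ∈ Finset.Icc 1 N) :
    {d ∈ Finset.Icc 1 N | d ∣ g} = g.divisors := by
  obtain ⟨g_pos, g_le⟩ := Finset.mem_Icc.1 hg
  ext d
  simp only [Finset.mem_filter, Finset.mem_Icc, Nat.mem_divisors]
  exact ⟨fun h ↦ ⟨h.2, Nat.ne_of_gt g_pos⟩, fun h ↦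
    ⟨⟨Nat.pos_of_dvd_of_pos h.1 g_pos, (Nat.le_of_dvd g_pos h.1).trans g_le⟩, h.1⟩⟩

theorem sum_moebius_filter_dvd_Icc {g N : ℕ} (hg : g ∈ Finset.Icc 1 N) :
    ∑ d ∈ Finset.Icc 1 N with d ∣ g, moebius d = if g = 1 then 1 else 0 := by
  rw [filter_dvd_Icc_eq_divisors hg, ← coe_mul_zeta_apply, moebius_mul_coe_zeta, one_apply]

theorem gcd_mem_Icc_of_nonempty {T : Finset ℕ} {N : ℕ} (hne : T.Nonempty)
    (hT : T ⊆ Finset.Icc 1 N) : T.gcd id ∈ Finset.Icc 1 N := by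
  obtain ⟨a, ha⟩ := hne
  obtain ⟨a_pos, a_le⟩ := Finset.mem_Icc.1 (hT ha)
  have gcd_dvd : T.gcd id ∣ a := Finset.gcd_dvd ha
  exact Finset.mem_Icc.2
    ⟨Nat.pos_of_dvd_of_pos gcd_dvd a_pos, (Nat.le_of_dvd a_pos gcd_dvd).trans a_le⟩

theorem two_pow_card_filter_dvd (S : Finset ℕ) (d : ℕ) :
    2 ^ {a ∈ S | d ∣ a}.card = {T ∈ S.powerset | d ∣ T.gcd id}.card := by
  rw [← Finset.card_powerset]
  congr 1
  ext T
  simp only [Finset.mem_powerset, Finset.mem_filter, Finset.dvd_gcd_iff, id,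
    Finset.subset_iff, forall_and]

theorem sum_moebius_mul_two_pow_card_filter_dvd {S : Finset ℕ} {N : ℕ}
    (hS : S ⊆ Finset.Icc 1 N) :
    ∑ d ∈ Finset.Icc 1 N, moebius d * 2 ^ {a ∈ S | d ∣ a}.card =
      (coprimeSubsets S).card + ∑ d ∈ Finset.Icc 1 N, moebius d := by
  have sum_nonempty : ∀ T ∈ S.powerset.erase ∅,
      ∑ d ∈ Finset.Icc 1 N with d ∣ T.gcd id, moebius d = if T.gcd id = 1 then 1 else 0 := by
    intro T hT
    obtain ⟨hne, hTS⟩ := Finset.mem_erase.1 hT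
    exact sum_moebius_filter_dvd_Icc (gcd_mem_Icc_of_nonempty
      (Finset.nonempty_iff_ne_empty.2 hne) ((Finset.mem_powerset.1 hTS).trans hS))
  calc ∑ d ∈ Finset.Icc 1 N, moebius d * 2 ^ {a ∈ S | d ∣ a}.card
      = ∑ d ∈ Finset.Icc 1 N, ∑ T ∈ S.powerset, if d ∣ T.gcd id then moebius d else 0 := by
        refine Finset.sum_congr rfl fun d _ ↦ ?_
        have two_pow := congrArg (Nat.cast : ℕ → ℤ) (two_pow_card_filter_dvd S d)
        push_cast at two_pow
        rw [two_pow, Finset.natCast_card_filter, Finset.mul_sum]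
        simp only [mul_ite, mul_one, mul_zero]
    _ = ∑ T ∈ S.powerset, ∑ d ∈ Finset.Icc 1 N with d ∣ T.gcd id, moebius d := by
        simp only [Finset.sum_comm (s := Finset.Icc 1 N), Finset.sum_filter]
    _ = (∑ T ∈ S.powerset.erase ∅, if T.gcd id = 1 then 1 else 0) +
          ∑ d ∈ Finset.Icc 1 N, moebius d := by
        rw [← Finset.sum_erase_add _ _ (Finset.empty_mem_powerset S),
          Finset.sum_congr rfl sum_nonempty]
        simp only [Finset.gcd_empty, dvd_zero, Finset.filter_true]
    _ = (coprimeSubsets S).card + ∑ d ∈ Finset.Icc 1 N, moebius d := by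
        rw [coprimeSubsets, Finset.natCast_card_filter, Finset.sum_erase _ (by simp)]

theorem card_filter_dvd_Ioc_s16 (a b d : ℕ) :
    {k ∈ Finset.Ioc a b | d ∣ k}.card = b / d - a / d := by
  rcases le_total a b with hab | hba
  · have card_add : {k ∈ Finset.Ioc 0 a | d ∣ k}.card + {k ∈ Finset.Ioc a b | d ∣ k}.card =
        {k ∈ Finset.Ioc 0 b | d ∣ k}.card := by
      rw [← Finset.Ioc_union_Ioc_eq_Ioc a.zero_le hab, Finset.filter_union,
        Finset.card_union_of_disjoint
          (Finset.disjoint_filter_filter (Finset.Ioc_disjoint_Ioc_of_le le_rfl))]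
    simp only [Nat.Ioc_filter_dvd_card_eq_div] at card_add
    omega
  · rw [Finset.Ioc_eq_empty_of_le hba, Finset.filter_empty, Finset.card_empty,
      Nat.sub_eq_zero_of_le (Nat.div_le_div_right hba)]

theorem card_filter_dvd_triple {m n : ℕ} (hn : 0 < n) (hm : n + 1 < m) (d : ℕ) :
    {a ∈ ({n, n + 1, m} : Finset ℕ) | d ∣ a}.card =
      (n + 1) / d - (n - 1) / d + m / d - (m - 1) / d := by
  have eq_union : ({n, n + 1, m} : Finset ℕ) =
      Finset.Ioc (n - 1) (n + 1) ∪ Finset.Ioc (m - 1) m := by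
    ext k
    simp only [Finset.mem_insert, Finset.mem_singleton, Finset.mem_union, Finset.mem_Ioc]
    omega
  have disjoint : Disjoint (Finset.Ioc (n - 1) (n + 1)) (Finset.Ioc (m - 1) m) :=
    Finset.Ioc_disjoint_Ioc_of_le (Nat.le_sub_one_of_lt hm)
  rw [eq_union, Finset.filter_union,
    Finset.card_union_of_disjoint (Finset.disjoint_filter_filter disjoint),
    card_filter_dvd_Ioc_s16, card_filter_dvd_Ioc_s16,
    Nat.add_sub_assoc (Nat.div_le_div_right (Nat.sub_le m 1))]

theorem card_coprimeSubsets_triple {a b c : ℕ} (ha : a ≠ 1) (hb : b ≠ 1) (hc : c ≠ 1)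
    (hab : a ≠ b) (hac : a ≠ c) (hbc : b ≠ c) :
    (coprimeSubsets {a, b, c}).card =
      (if a.Coprime b then 1 else 0) + (if a.Coprime c then 1 else 0) +
        (if b.Coprime c then 1 else 0) + if a.Coprime (b.gcd c) then 1 else 0 := by
  have a_notMem : a ∉ ({b, c} : Finset ℕ) := by simp [hab, hac]
  have b_notMem : b ∉ ({c} : Finset ℕ) := by simp [hbc]
  rw [coprimeSubsets, Finset.card_filter, Finset.sum_powerset_insert a_notMem,
    Finset.sum_powerset_insert b_notMem, Finset.sum_powerset_insert b_notMem,
    ← insert_empty_eq c]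
  simp only [Finset.sum_powerset_insert (Finset.notMem_empty c), Finset.powerset_empty,
    Finset.sum_singleton]
  simp only [LawfulSingleton.insert_empty_eq, Finset.gcd_empty, Finset.gcd_singleton,
    Finset.gcd_insert, id, normalize_eq, gcd_eq_nat_gcd, ha, hb, hc, zero_ne_one, if_false,
    ← Nat.coprime_iff_gcd_eq_one]
  ring

theorem card_coprimeSubsets_triple_of_coprime {a b c : ℕ} (ha : a ≠ 1) (hb : b ≠ 1) (hc : c ≠ 1)
    (hac : a ≠ c) (hbc : b ≠ c) (hcop : a.Coprime b) :
    (coprimeSubsets {a, b, c}).card =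
      2 + (if a.Coprime c then 1 else 0) + if b.Coprime c then 1 else 0 := by
  have hab : a ≠ b := by
    rintro rfl
    exact ha ((Nat.coprime_self a).1 hcop)
  have coprime_gcd : a.Coprime (b.gcd c) := hcop.coprime_dvd_right (Nat.gcd_dvd_left b c)
  rw [card_coprimeSubsets_triple ha hb hc hab hac hbc, if_pos hcop, if_pos coprime_gcd]
  ring

theorem sum_moebius_mul_two_pow_floor_sub {m n : ℕ} (hn : 1 < n) (hm : n + 1 < m) :
    ∑ d ∈ Finset.Icc 1 m,
        moebius d * 2 ^ ((n + 1) / d - (n - 1) / d + m / d - (m - 1) / d) =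
      2 + (if m.Coprime n then 1 else 0) + (if m.Coprime (n + 1) then 1 else 0) +
        ∑ d ∈ Finset.Icc 1 m, moebius d := by
  have subset_Icc : ({n, n + 1, m} : Finset ℕ) ⊆ Finset.Icc 1 m := by
    intro a ha
    simp only [Finset.mem_insert, Finset.mem_singleton] at ha
    exact Finset.mem_Icc.2 (by omega)
  have card_eq := card_coprimeSubsets_triple_of_coprime (a := n) (b := n + 1) (c := m)
    (by omega) (by omega) (by omega) (by omega) (by omega) (by simp)
  simp only [← card_filter_dvd_triple (Nat.zero_lt_of_lt hn) hm,
    sum_moebius_mul_two_pow_card_filter_dvd subset_Icc, card_eq, m.coprime_comm]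
  push_cast
  rfl

/-- Theorem (b): for `1 < n < m - 1`,
`∑_{d=1}^{m} μ(d) 2^{⌊(n+1)/d⌋ - ⌊(n-1)/d⌋ + ⌊m/d⌋ - ⌊(m-1)/d⌋}` equals
`2 + M(m)`, `3 + M(m)`, or `4 + M(m)` according to the coprimality of `m`
with `n` and `n+1`, where `M` is the Mertens function. -/
theorem stmt_16 (m n : ℕ) (hn : 1 < n) (hm : n < m - 1) :
    (1 < Nat.gcd m n ∧ 1 < Nat.gcd m (n + 1) →
      ∑ d ∈ Finset.Icc 1 m,
          (ArithmeticFunction.moebius d) *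
            2 ^ ((n + 1) / d - (n - 1) / d + m / d - (m - 1) / d)
        = 2 + ∑ d ∈ Finset.Icc 1 m, (ArithmeticFunction.moebius d : ℤ)) ∧
    ((Nat.gcd m n = 1 ∧ 1 < Nat.gcd m (n + 1)) ∨
        (1 < Nat.gcd m n ∧ Nat.gcd m (n + 1) = 1) →
      ∑ d ∈ Finset.Icc 1 m,
          (ArithmeticFunction.moebius d) *
            2 ^ ((n + 1) / d - (n - 1) / d + m / d - (m - 1) / d)
        = 3 + ∑ d ∈ Finset.Icc 1 m, (ArithmeticFunction.moebius d : ℤ)) ∧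
    (Nat.gcd m n = 1 ∧ Nat.gcd m (n + 1) = 1 →
      ∑ d ∈ Finset.Icc 1 m,
          (ArithmeticFunction.moebius d) *
            2 ^ ((n + 1) / d - (n - 1) / d + m / d - (m - 1) / d)
        = 4 + ∑ d ∈ Finset.Icc 1 m, (ArithmeticFunction.moebius d : ℤ)) := by
  rw [sum_moebius_mul_two_pow_floor_sub hn (Nat.add_lt_of_lt_sub hm)]
  refine ⟨?_, ?_, ?_⟩
  · rintro ⟨hgcd_n, hgcd_succ⟩
    rw [if_neg hgcd_n.ne', if_neg hgcd_succ.ne']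
    ring
  · rintro (⟨hgcd_n, hgcd_succ⟩ | ⟨hgcd_n, hgcd_succ⟩)
    · rw [if_pos hgcd_n, if_neg hgcd_succ.ne']
      ring
    · rw [if_neg hgcd_n.ne', if_pos hgcd_succ]
      ring
  · rintro ⟨hgcd_n, hgcd_succ⟩
    rw [if_pos hgcd_n, if_pos hgcd_succ]
    ring
end
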